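/- Let P be a set of n ≥ 5 points in the plane in convex position. Then every partition of the edge set of the complete geometric graph K(P) into classes each of which is 1-plane uses at least ⌈n/3⌉ classes. -/

import Mathlib

/-- Points of the plane. -/
abbrev Pt : Type := ℝ × ℝ

/-- A finite point set is in general position if no three of its points are collinear. -/
def GenPos (P : Finset Pt) : Prop :=
  ∀ p ∈ P, ∀ q ∈ P, ∀ r ∈ P, p ≠ q → p ≠ r → q ≠ r →
    ¬ Collinear ℝ ({p, q, r} : Set Pt)

/-- A finite point set is in convex position: general position and no point lies in the
convex hull of the others. -/
def ConvexPos (P : Finset Pt) : Prop :=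
  GenPos P ∧ ∀ p ∈ P, p ∉ convexHull ℝ ((P.erase p : Finset Pt) : Set Pt)

/-- The edge set of the complete geometric graph on `P`: all unordered pairs of
distinct points of `P`. -/
def KEdges (P : Finset Pt) : Set (Sym2 Pt) :=
  {e | ∃ p ∈ P, ∃ q ∈ P, p ≠ q ∧ e = s(p, q)}

/-- Two edges cross: they share no endpoint and their open segments intersect. -/
def Cross (e f : Sym2 Pt) : Prop :=
  (∀ x, x ∈ e → x ∉ f) ∧
    ∃ p q r s : Pt, e = s(p, q) ∧ f = s(r, s) ∧
      (openSegment ℝ p q ∩ openSegment ℝ r s).Nonempty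

/-- A set of edges is `k`-plane if each of its edges crosses at most `k` other edges
of the set. -/
def KPlane (k : ℕ) (E : Set (Sym2 Pt)) : Prop :=
  ∀ e ∈ E, {f | f ∈ E ∧ Cross e f}.ncard ≤ k

/-- A set of edges is `k`-quasi-plane if it contains no `k` pairwise crossing edges. -/
def KQuasiPlane (k : ℕ) (E : Set (Sym2 Pt)) : Prop :=
  ¬ ∃ S : Finset (Sym2 Pt), ↑S ⊆ E ∧ S.card = k ∧
      (S : Set (Sym2 Pt)).Pairwise Cross

/-- The set of crossing pairs (unordered) of a set of edges. -/
def CrossPairs (E : Set (Sym2 Pt)) : Set (Sym2 (Sym2 Pt)) :=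
  {c | ∃ e ∈ E, ∃ f ∈ E, Cross e f ∧ c = s(e, f)}

/-- A crossing family in `K(P)`: a finite set of pairwise crossing edges of `K(P)`. -/
def CrossingFamily (P : Finset Pt) (S : Finset (Sym2 Pt)) : Prop :=
  ↑S ⊆ KEdges P ∧ (S : Set (Sym2 Pt)).Pairwise Cross

/-- `E` forms a spanning tree on the point set `P`: all edges are edges of `K(P)` and the
corresponding graph on the points of `P` is connected and acyclic. -/
def IsSpanningTreeOn (P : Finset Pt) (E : Set (Sym2 Pt)) : Prop :=
  E ⊆ KEdges P ∧
    (SimpleGraph.fromRel (fun a b : {x // x ∈ P} => s((a : Pt), (b : Pt)) ∈ E)).IsTree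

/-!
In convex position every vertex `p` is strictly separated from the others by a line, so the
vertices can be ordered by angle around `p`. Any three vertices are then positively oriented in
this order, and two edges cross as soon as their endpoints alternate.

A 1-plane set of chords on `s ≥ 2` vertices has at most `5s/2 - 4` elements. Indeed, without
crossings there are at most `2s - 3` of them. Otherwise the endpoints of a crossing pair cut the
polygon into four arcs with `s + 4` vertices in total, every chord outside the pair lives on one
of the arcs, and induction gives at most `2 + 5(s + 4)/2 - 4·4` chords. Since the `n` sides cross
nothing, they can be added to each class for free, so a class contains at most `3n/2 - 4` of the
`n(n - 3)/2` diagonals. Hence there are at least `n(n - 3)/(3n - 8)` classes, which is more than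
`(n - 1)/3` when `n ≥ 5`.
-/

section Chords

open Finset

variable {α : Type*} [LinearOrder α] {S : Finset α} {E : Finset (α × α)}

/-- The chords of a finite linearly ordered set, thought of as the vertices of a convex polygon
listed along its boundary. A chord is encoded as the pair of its endpoints, the smaller one
first. -/
def chords (S : Finset α) : Finset (α × α) := {e ∈ S.offDiag | e.1 < e.2}

/-- Two chords, given by their increasing pairs of endpoints, interlace if their endpoints
alternate: this is crossing for chords of a convex polygon. -/
def Interlace (e f : α × α) : Prop :=
  e.1 < f.1 ∧ f.1 < e.2 ∧ e.2 < f.2 ∨ f.1 < e.1 ∧ e.1 < f.2 ∧ f.2 < e.2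

/-- The combinatorial form of 1-planarity: every chord of `E` interlaces at most one chord
of `E`. -/
def IsOnePlane (E : Set (α × α)) : Prop := ∀ e ∈ E, {f ∈ E | Interlace e f}.Subsingleton

lemma mem_chords {e : α × α} : e ∈ chords S ↔ e.1 ∈ S ∧ e.2 ∈ S ∧ e.1 < e.2 := by
  simp only [chords, mem_filter, mem_offDiag]
  grind

lemma card_chords (S : Finset α) : #(chords S) = (#S).choose 2 := by
  have h := sum_sym2_filter_not_isDiag S fun _ ↦ 1
  simp only [sum_const, smul_eq_mul, mul_one] at h
  rw [chords, ← h, ← Sym2.card_image_offDiag, ← Sym2.filter_image_mk_not_isDiag, sym2_eq_image]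

lemma Interlace.symm {e f : α × α} (h : Interlace e f) : Interlace f e := Or.symm h

lemma IsOnePlane.mono {E E' : Set (α × α)} (hE : IsOnePlane E) (h : E' ⊆ E) : IsOnePlane E' :=
  fun e he ↦ (hE e (h he)).anti fun _ hf ↦ ⟨h hf.1, hf.2⟩

lemma IsOnePlane.union_of_forall_not_interlace {E H : Set (α × α)} (hE : IsOnePlane E)
    (hH : ∀ e ∈ H, ∀ f, ¬ Interlace e f) : IsOnePlane (E ∪ H) := by
  have mem_left {e f : α × α} (he : e ∈ E ∪ H) (hef : Interlace e f) : e ∈ E :=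
    he.resolve_right fun h ↦ hH e h f hef
  rintro e he f ⟨hf, hef⟩ g ⟨hg, heg⟩
  exact hE e (mem_left he hef) ⟨mem_left hf hef.symm, hef⟩ ⟨mem_left hg heg.symm, heg⟩

-- A chord is determined by its left endpoint if it is the longest one there. Otherwise it is
-- determined by its right endpoint, as a longer chord from the left endpoint of one would cross
-- the other.
lemma card_add_three_le_of_pairwise_not_interlace (hS : S.Nontrivial) (hE : E ⊆ chords S)
    (hX : ∀ e ∈ E, ∀ f ∈ E, ¬ Interlace e f) : #E + 3 ≤ 2 * #S := by
  simp only [Interlace] at hX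
  have hE' : ∀ e ∈ E, e.1 ∈ S ∧ e.2 ∈ S ∧ e.1 < e.2 := fun e he ↦ mem_chords.1 (hE he)
  obtain ⟨M, hM, hle⟩ := S.exists_max_image id hS.nonempty
  obtain ⟨m, hm, hge⟩ := S.exists_min_image id hS.nonempty
  simp only [id_eq] at hle hge
  have hmM : m ≠ M := by
    obtain ⟨x, hx, y, hy, hxy⟩ := hS
    grind
  let IsShort (e : α × α) : Prop := ∃ e' ∈ E, e'.1 = e.1 ∧ e.2 < e'.2
  have hshort : #{e ∈ E | IsShort e} ≤ #((S.erase M).erase m) :=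
    card_le_card_of_injOn Prod.snd (fun e he ↦ by grind) (fun e he f hf h ↦ by grind)
  have hlong : #{e ∈ E | ¬ IsShort e} ≤ #(S.erase M) :=
    card_le_card_of_injOn Prod.fst (fun e he ↦ by grind) (fun e he f hf h ↦ by grind)
  have hsplit := card_filter_add_card_filter_not (s := E) IsShort
  have hcardM := card_erase_add_one hM
  have hcardm := card_erase_add_one (mem_erase.2 ⟨hmM, hm⟩)
  lia

/-- The arcs into which four vertices `a < b < c < d` cut the cyclically ordered set `S`, each
including its two end vertices. -/
def arcs (S : Finset α) (a b c d : α) : Fin 4 → Finset α :=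
  ![{x ∈ S | a ≤ x ∧ x ≤ b}, {x ∈ S | b ≤ x ∧ x ≤ c}, {x ∈ S | c ≤ x ∧ x ≤ d},
    {x ∈ S | x ≤ a ∨ d ≤ x}]

section Arcs

variable {a b c d : α}

lemma sum_card_arcs (hab : a < b) (hbc : b < c) (hcd : c < d) (ha : a ∈ S) (hb : b ∈ S)
    (hc : c ∈ S) (hd : d ∈ S) : ∑ i, #(arcs S a b c d i) = #S + 4 := by
  have hcorners : #{x ∈ S | x = a ∨ x = b ∨ x = c ∨ x = d} = 4 := by
    rw [show ({x ∈ S | x = a ∨ x = b ∨ x = c ∨ x = d} : Finset α) = {a, b, c, d} by grind]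
    grind
  simp only [← hcorners, Fin.sum_univ_four, arcs, Matrix.cons_val, card_filter,
    card_eq_sum_ones S, ← sum_add_distrib]
  exact sum_congr rfl fun x _ ↦ by grind

lemma arcs_ssubset (hab : a < b) (hbc : b < c) (hcd : c < d) (ha : a ∈ S) (hb : b ∈ S)
    (hc : c ∈ S) (i : Fin 4) : arcs S a b c d i ⊂ S := by
  fin_cases i <;> refine filter_ssubset.2 ?_
  exacts [⟨c, by grind⟩, ⟨a, by grind⟩, ⟨a, by grind⟩, ⟨b, by grind⟩]

lemma arcs_nontrivial (hab : a < b) (hbc : b < c) (hcd : c < d) (ha : a ∈ S) (hb : b ∈ S)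
    (hc : c ∈ S) (hd : d ∈ S) (i : Fin 4) : (arcs S a b c d i).Nontrivial := by
  fin_cases i
  exacts [⟨a, by simp [arcs, *, le_of_lt], b, by simp [arcs, *, le_of_lt], hab.ne⟩,
    ⟨b, by simp [arcs, *, le_of_lt], c, by simp [arcs, *, le_of_lt], hbc.ne⟩,
    ⟨c, by simp [arcs, *, le_of_lt], d, by simp [arcs, *, le_of_lt], hcd.ne⟩,
    ⟨a, by simp [arcs, *], d, by simp [arcs, *], (hab.trans <| hbc.trans hcd).ne⟩]

lemma mem_chords_arcs_of_not_interlace (hab : a < b) (hbc : b < c) (hcd : c < d) {e : α × α}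
    (he : e ∈ chords S) (hac : ¬ Interlace (a, c) e) (hbd : ¬ Interlace (b, d) e) :
    ∃ i, e ∈ chords (arcs S a b c d i) := by
  simp only [Fin.exists_fin_succ, Fin.exists_fin_zero, arcs, Matrix.cons_val_zero,
    Matrix.cons_val_succ, mem_chords, mem_filter]
  simp only [mem_chords, Interlace] at he hac hbd
  grind

lemma IsOnePlane.subset_crossing_union_arcs (hE : E ⊆ chords S)
    (hX : IsOnePlane (E : Set (α × α))) (hac : (a, c) ∈ E) (hbd : (b, d) ∈ E)
    (hab : a < b) (hbc : b < c) (hcd : c < d) :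
    E ⊆ {(a, c), (b, d)} ∪ univ.biUnion fun i ↦ E ∩ chords (arcs S a b c d i) := by
  have hcross : Interlace (a, c) (b, d) := .inl ⟨hab, hbc, hcd⟩
  intro e he
  by_cases hace : Interlace (a, c) e
  · simp [show e = (b, d) from hX _ hac ⟨he, hace⟩ ⟨hbd, hcross⟩]
  by_cases hbde : Interlace (b, d) e
  · simp [show e = (a, c) from hX _ hbd ⟨he, hbde⟩ ⟨hac, hcross.symm⟩]
  obtain ⟨i, hi⟩ := mem_chords_arcs_of_not_interlace hab hbc hcd (hE he) hace hbde
  exact mem_union_right _ <| mem_biUnion.2 ⟨i, mem_univ i, mem_inter.2 ⟨he, hi⟩⟩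

end Arcs

theorem IsOnePlane.two_mul_card_add_eight_le (hS : S.Nontrivial) (hE : E ⊆ chords S)
    (hX : IsOnePlane (E : Set (α × α))) : 2 * #E + 8 ≤ 5 * #S := by
  induction S using Finset.strongInduction generalizing E with
  | H S ih =>
  by_cases hcross : ∃ e ∈ E, ∃ f ∈ E, Interlace e f
  · obtain ⟨⟨a, c⟩, hac, ⟨b, d⟩, hbd, hab, hbc, hcd⟩ :
        ∃ e ∈ E, ∃ f ∈ E, e.1 < f.1 ∧ f.1 < e.2 ∧ e.2 < f.2 := by
      obtain ⟨e, he, f, hf, h | h⟩ := hcross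
      exacts [⟨e, he, f, hf, h⟩, ⟨f, hf, e, he, h⟩]
    obtain ⟨ha, hc, -⟩ := mem_chords.1 (hE hac)
    obtain ⟨hb, hd, -⟩ := mem_chords.1 (hE hbd)
    have harcs (i : Fin 4) : 2 * #(E ∩ chords (arcs S a b c d i)) + 8 ≤ 5 * #(arcs S a b c d i) :=
      ih _ (arcs_ssubset hab hbc hcd ha hb hc i) (arcs_nontrivial hab hbc hcd ha hb hc hd i)
        inter_subset_right (hX.mono (by simp))
    have hcard : #E ≤ 2 + ∑ i, #(E ∩ chords (arcs S a b c d i)) :=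
      (card_le_card <| hX.subset_crossing_union_arcs hE hac hbd hab hbc hcd).trans <|
        (card_union_le _ _).trans <| add_le_add card_le_two card_biUnion_le
    have hsum := sum_card_arcs hab hbc hcd ha hb hc hd
    simp only [Fin.sum_univ_four] at hcard hsum
    linarith [harcs 0, harcs 1, harcs 2, harcs 3]
  · push Not at hcross
    have := card_add_three_le_of_pairwise_not_interlace hS hE hcross
    have := one_lt_card_iff_nontrivial.2 hS
    lia

end Chords

section Polygon

open Finset

variable {n : ℕ}

/-- The sides of the convex polygon with vertices `0, 1, …, n`. -/
def sides (n : ℕ) : Finset (Fin (n + 1) × Fin (n + 1)) :=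
  insert (0, Fin.last n) (univ.image fun i : Fin n ↦ (i.castSucc, i.succ))

lemma card_sides (hn : 2 ≤ n) : #(sides n) = n + 1 := by
  rw [sides, card_insert_of_notMem, card_image_of_injective _ fun i j h ↦ by grind, card_fin]
  simp only [mem_image, mem_univ, true_and, Prod.mk.injEq, not_exists, not_and]
  rintro i hi hlast
  simp only [Fin.ext_iff, Fin.val_castSucc, Fin.val_zero, Fin.val_succ, Fin.val_last] at hi hlast
  lia

lemma sides_subset_chords (hn : 1 ≤ n) : sides n ⊆ chords univ := by
  intro e he
  simp only [sides, mem_insert, mem_image, mem_univ, true_and] at he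
  simp only [mem_chords, mem_univ, true_and]
  obtain rfl | ⟨i, rfl⟩ := he
  · exact Fin.lt_def.2 (by simpa)
  · exact i.castSucc_lt_succ

lemma not_interlace_of_mem_sides {e : Fin (n + 1) × Fin (n + 1)} (he : e ∈ sides n)
    (f : Fin (n + 1) × Fin (n + 1)) : ¬ Interlace e f := by
  simp only [sides, mem_insert, mem_image, mem_univ, true_and] at he
  simp only [Interlace]
  obtain rfl | ⟨i, rfl⟩ := he <;> grind

lemma IsOnePlane.two_mul_card_sdiff_sides_add_eight_le (hn : 2 ≤ n)
    {E : Finset (Fin (n + 1) × Fin (n + 1))} (hE : E ⊆ chords univ)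
    (hX : IsOnePlane (E : Set (Fin (n + 1) × Fin (n + 1)))) :
    2 * #(E \ sides n) + 8 ≤ 3 * (n + 1) := by
  have hX' : IsOnePlane (↑(E ∪ sides n) : Set (Fin (n + 1) × Fin (n + 1))) := by
    rw [coe_union]
    exact hX.union_of_forall_not_interlace fun e he ↦ not_interlace_of_mem_sides he
  have hbound := hX'.two_mul_card_add_eight_le (S := univ)
    (one_lt_card_iff_nontrivial.1 (by simp; lia))
    (union_subset hE (sides_subset_chords (by lia)))
  have hcard := card_sdiff_add_card E (sides n)
  rw [card_sides hn] at hcard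
  rw [card_fin] at hbound
  lia

theorem le_three_mul_card_of_isOnePlane_cover (hn : 4 ≤ n) {ι : Type*} [Fintype ι]
    (E : ι → Finset (Fin (n + 1) × Fin (n + 1)))
    (hX : ∀ i, IsOnePlane (E i : Set (Fin (n + 1) × Fin (n + 1))))
    (hE : univ.biUnion E = chords univ) : n + 1 ≤ 3 * Fintype.card ι := by
  have hcover : chords univ ⊆ univ.biUnion (fun i ↦ E i \ sides n) ∪ sides n := by
    rw [← hE]
    grind
  have hcard : #(chords (univ : Finset (Fin (n + 1)))) ≤ ∑ i, #(E i \ sides n) + (n + 1) := by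
    grw [hcover, card_union_le, card_biUnion_le, card_sides (by lia)]
  have hclass : ∑ i, (2 * #(E i \ sides n) + 8) ≤ Fintype.card ι * (3 * (n + 1)) :=
    sum_le_card_nsmul _ _ _ fun i hi ↦
      (hX i).two_mul_card_sdiff_sides_add_eight_le (by lia) (hE ▸ subset_biUnion_of_mem E hi)
  rw [card_chords, card_fin] at hcard
  rw [sum_add_distrib, ← mul_sum, sum_const, card_univ, smul_eq_mul] at hclass
  have hchoose : (n + 1) * n = (n + 1).choose 2 * 2 := by
    simpa using Nat.add_one_mul_choose_eq n 1
  by_contra! hlt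
  nlinarith

end Polygon

section Orientation

/-- The orientation determinant of three points of the plane: positive if they form a
counterclockwise triangle, zero if they are collinear. -/
def orient (a b c : Pt) : ℝ := (b.1 - a.1) * (c.2 - a.2) - (b.2 - a.2) * (c.1 - a.1)

variable {a b c d p x y z : Pt}

lemma orient_swap_right (a b c : Pt) : orient a c b = -orient a b c := by
  simp only [orient]
  ring

lemma orient_self_right (a b : Pt) : orient a b b = 0 := by
  simp only [orient]
  ring

lemma orient_smul_sub (p x y z : Pt) :
    orient p x z • (y - p) = orient p y z • (x - p) + orient p x y • (z - p) := by
  ext <;> simp [orient] <;> ring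

lemma orient_trans {ℓ : Pt →ₗ[ℝ] ℝ} (hx : ℓ p < ℓ x) (hy : ℓ p < ℓ y) (hz : ℓ p < ℓ z)
    (hxy : 0 < orient p x y) (hyz : 0 < orient p y z) : 0 < orient p x z := by
  have h := congrArg ℓ (orient_smul_sub p x y z)
  simp only [map_add, map_smul, map_sub, smul_eq_mul] at h
  rw [← sub_pos] at hx hy hz
  exact pos_of_mul_pos_left (h ▸ by positivity) hy.le

lemma collinear_of_orient_eq_zero (h : orient a b c = 0) : Collinear ℝ {a, b, c} := by
  obtain rfl | hab := eq_or_ne a b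
  · simpa using collinear_pair ℝ a c
  have hpos : (b.1 - a.1) ^ 2 + (b.2 - a.2) ^ 2 ≠ 0 := fun h0 ↦
    hab <| Prod.ext (by nlinarith) (by nlinarith)
  refine (collinear_iff_of_mem (p₀ := a) (by simp)).2 ⟨b - a, ?_⟩
  simp only [Set.mem_insert_iff, Set.mem_singleton_iff, forall_eq_or_imp, forall_eq]
  refine ⟨⟨0, by simp⟩, ⟨1, by simp⟩,
    ⟨((b.1 - a.1) * (c.1 - a.1) + (b.2 - a.2) * (c.2 - a.2)) /
      ((b.1 - a.1) ^ 2 + (b.2 - a.2) ^ 2), ?_⟩⟩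
  simp only [orient] at h
  ext
  · simp
    field_simp
    linear_combination (a.2 - b.2) * h
  · simp
    field_simp
    linear_combination (b.1 - a.1) * h

-- The barycentric coordinates of `b` are ratios of orientation determinants.
lemma mem_convexHull_of_orient (h₁ : 0 < orient p a b) (h₂ : 0 < orient p b c)
    (h₃ : orient a b c ≤ 0) : b ∈ convexHull ℝ {p, a, c} := by
  have hsum : -orient a b c + orient p b c + orient p a b = orient p a c := by
    simp only [orient]
    ring
  have hpos : 0 < orient p a c := by linarith
  have hb : ∑ i, ![-orient a b c / orient p a c, orient p b c / orient p a c,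
      orient p a b / orient p a c] i • ![p, a, c] i = b := by
    simp only [Fin.sum_univ_three, Matrix.cons_val]
    ext <;> simp <;> field_simp <;> simp only [orient] <;> ring
  rw [← hb]
  refine (convex_convexHull ℝ _).sum_mem (fun i _ ↦ ?_) ?_ fun i _ ↦ subset_convexHull ℝ _ ?_
  · fin_cases i
    exacts [div_nonneg (neg_nonneg.2 h₃) hpos.le, div_nonneg h₂.le hpos.le,
      div_nonneg h₁.le hpos.le]
  · simp only [Fin.sum_univ_three, Matrix.cons_val, ← add_div, hsum, div_self hpos.ne']
  · fin_cases i <;> simp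

-- Each diagonal divides the other in the ratio of the areas of the two triangles on its sides.
lemma openSegment_inter_nonempty_of_orient_pos (habc : 0 < orient a b c) (habd : 0 < orient a b d)
    (hacd : 0 < orient a c d) (hbcd : 0 < orient b c d) :
    (openSegment ℝ a c ∩ openSegment ℝ b d).Nonempty := by
  have hsum : orient b c d + orient a b d = orient a c d + orient a b c := by
    simp only [orient]
    ring
  have hmeet : (orient b c d / (orient b c d + orient a b d)) • a +
      (orient a b d / (orient b c d + orient a b d)) • c =
      (orient a c d / (orient a c d + orient a b c)) • b +
      (orient a b c / (orient a c d + orient a b c)) • d := by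
    rw [← hsum]
    ext <;> simp <;> field_simp <;> simp only [orient] <;> ring
  exact ⟨_, ⟨_, _, by positivity, by positivity, by field_simp, rfl⟩,
    ⟨_, _, by positivity, by positivity, by field_simp, hmeet.symm⟩⟩

end Orientation

section ConvexPosition

open Finset

variable {P : Finset Pt} {p x y z : Pt}

/-- The strict order on the vertices of a convex polygon which starts at the vertex `p` and
continues counterclockwise around `p`. -/
def CCWLT (p x y : Pt) : Prop := y ≠ p ∧ (x = p ∨ 0 < orient p x y)

lemma ConvexPos.exists_linearMap_lt (hP : ConvexPos P) (hp : p ∈ P) :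
    ∃ ℓ : Pt →ₗ[ℝ] ℝ, ∀ x ∈ P, x ≠ p → ℓ p < ℓ x := by
  obtain ⟨ℓ, u, hpu, hu⟩ := geometric_hahn_banach_point_closed (convex_convexHull ℝ _)
    ((P.erase p).finite_toSet.isClosed_convexHull ℝ) (hP.2 p hp)
  exact ⟨ℓ, fun x hx hxp ↦ hpu.trans <| hu x <| subset_convexHull ℝ _ <| by simp [hx, hxp]⟩

lemma not_ccwLT_self (p x : Pt) : ¬ CCWLT p x x := by
  simp [CCWLT, orient_self_right]

lemma ConvexPos.ccwLT_trans (hP : ConvexPos P) (hp : p ∈ P) (hx : x ∈ P) (hy : y ∈ P) (hz : z ∈ P)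
    (hxy : CCWLT p x y) (hyz : CCWLT p y z) : CCWLT p x z := by
  obtain ⟨ℓ, hℓ⟩ := hP.exists_linearMap_lt hp
  refine ⟨hyz.1, or_iff_not_imp_left.2 fun hxp ↦ ?_⟩
  exact orient_trans (hℓ x hx hxp) (hℓ y hy hxy.1) (hℓ z hz hyz.1) (hxy.2.resolve_left hxp)
    (hyz.2.resolve_left hxy.1)

lemma GenPos.ccwLT_or_ccwLT (hP : GenPos P) (hp : p ∈ P) (hx : x ∈ P) (hy : y ∈ P) (hxy : x ≠ y) :
    CCWLT p x y ∨ CCWLT p y x := by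
  by_cases hxp : x = p
  · exact .inl ⟨fun hyp ↦ hxy (hxp.trans hyp.symm), .inl hxp⟩
  by_cases hyp : y = p
  · exact .inr ⟨hxp, .inl hyp⟩
  have hne : orient p x y ≠ 0 := fun h ↦
    hP p hp x hx y hy (Ne.symm hxp) (Ne.symm hyp) hxy (collinear_of_orient_eq_zero h)
  obtain hneg | hpos := hne.lt_or_gt
  · exact .inr ⟨hxp, .inr <| by rwa [orient_swap_right, neg_pos]⟩
  · exact .inl ⟨hyp, .inr hpos⟩

lemma ConvexPos.orient_pos_of_ccwLT (hP : ConvexPos P) (hp : p ∈ P) (hx : x ∈ P) (hy : y ∈ P)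
    (hz : z ∈ P) (hxy : CCWLT p x y) (hyz : CCWLT p y z) : 0 < orient x y z := by
  have hpyz : 0 < orient p y z := hyz.2.resolve_left hxy.1
  obtain rfl | hxp := eq_or_ne x p
  · exact hpyz
  by_contra! hle
  refine hP.2 y hy (convexHull_mono ?_ <|
    mem_convexHull_of_orient (hxy.2.resolve_left hxp) hpyz hle)
  have hxy' : x ≠ y := fun h ↦ not_ccwLT_self p y (h ▸ hxy)
  have hzy : z ≠ y := fun h ↦ not_ccwLT_self p y (h ▸ hyz)
  simp [Set.insert_subset_iff, hp, hx, hz, hxy.1.symm, hxy', hzy]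

theorem ConvexPos.exists_ccw_enumeration (hP : ConvexPos P) {n : ℕ} (hn : #P = n) :
    ∃ f : Fin n ≃ P, ∀ i j k, i < j → j < k → 0 < orient (f i) (f j) (f k) := by
  obtain rfl | ⟨p, hp⟩ := P.eq_empty_or_nonempty
  · obtain rfl : 0 = n := hn
    exact ⟨Equiv.equivOfIsEmpty _ _, fun i ↦ i.elim0⟩
  let r (x y : P) : Prop := CCWLT p x y
  have : IsStrictTotalOrder P r :=
    { irrefl := fun x ↦ not_ccwLT_self p x
      trans := fun x y z ↦ hP.ccwLT_trans hp x.2 y.2 z.2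
      trichotomous := fun x y hxy hyx ↦ by_contra fun hne ↦
        (hP.1.ccwLT_or_ccwLT hp x.2 y.2 (Subtype.coe_ne_coe.2 hne)).elim hxy hyx }
  classical
  let := linearOrderOfSTO r
  let f := Fintype.orderIsoFinOfCardEq P ((Fintype.card_coe P).trans hn)
  -- `P` also inherits the componentwise order of `ℝ × ℝ`, so the instance has to be named.
  have hf : ∀ i j, i < j → r (f i) (f j) := fun i j hij ↦
    @OrderIso.strictMono _ _ _ (linearOrderOfSTO r).toPreorder f i j hij
  exact ⟨f, fun i j k hij hjk ↦
    hP.orient_pos_of_ccwLT hp (f i).2 (f j).2 (f k).2 (hf i j hij) (hf j k hjk)⟩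

end ConvexPosition

section Drawing

open Finset Function

variable {α : Type*} [LinearOrder α] {f : α → Pt}

lemma finite_kEdges (P : Finset Pt) : (KEdges P).Finite := by
  refine ((P ×ˢ P).finite_toSet.image Sym2.mk.uncurry).subset ?_
  rintro _ ⟨p, hp, q, hq, -, rfl⟩
  exact ⟨(p, q), mem_product.2 ⟨hp, hq⟩, rfl⟩

lemma Cross.symm {e f : Sym2 Pt} (h : Cross e f) : Cross f e := by
  obtain ⟨hdisj, p, q, r, s, he, hf, hmeet⟩ := h
  exact ⟨fun x hxf hxe ↦ hdisj x hxe hxf, r, s, p, q, hf, he, Set.inter_comm _ _ ▸ hmeet⟩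

lemma cross_of_interlace (hf : Injective f)
    (hccw : ∀ i j k, i < j → j < k → 0 < orient (f i) (f j) (f k)) {e g : α × α}
    (h : Interlace e g) : Cross s(f e.1, f e.2) s(f g.1, f g.2) := by
  have cross_of_lt {a b c d : α} (hab : a < b) (hbc : b < c) (hcd : c < d) :
      Cross s(f a, f c) s(f b, f d) := by
    refine ⟨fun x hx hx' ↦ ?_, _, _, _, _, rfl, rfl, openSegment_inter_nonempty_of_orient_pos
      (hccw a b c hab hbc) (hccw a b d hab (hbc.trans hcd)) (hccw a c d (hab.trans hbc) hcd)
      (hccw b c d hbc hcd)⟩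
    rw [Sym2.mem_iff] at hx hx'
    grind [hf.eq_iff]
  obtain ⟨h₁, h₂, h₃⟩ | ⟨h₁, h₂, h₃⟩ := h
  · exact cross_of_lt h₁ h₂ h₃
  · exact (cross_of_lt h₁ h₂ h₃).symm

lemma injOn_edge_of_injective (hf : Injective f) :
    Set.InjOn (fun e : α × α ↦ s(f e.1, f e.2)) {e | e.1 < e.2} := by
  intro e he g hg h
  simp only [Set.mem_ofPred_eq] at he hg
  simp only [Sym2.eq_iff, hf.eq_iff] at h
  grind

lemma KPlane.isOnePlane (hf : Injective f)
    (hccw : ∀ i j k, i < j → j < k → 0 < orient (f i) (f j) (f k)) {F : Set (Sym2 Pt)}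
    (hF : KPlane 1 F) (hfin : F.Finite) :
    IsOnePlane {e : α × α | e.1 < e.2 ∧ s(f e.1, f e.2) ∈ F} := by
  rintro e ⟨-, he⟩ g ⟨⟨hg, hgF⟩, heg⟩ h ⟨⟨hh, hhF⟩, heh⟩
  have hunique := (Set.ncard_le_one (hfin.subset fun _ hq ↦ hq.1)).1 (hF _ he)
  exact injOn_edge_of_injective hf hg hh <| hunique _ ⟨hgF, cross_of_interlace hf hccw heg⟩ _
    ⟨hhF, cross_of_interlace hf hccw heh⟩

end Drawing

theorem stmt_1_general {ι : Type*} [Fintype ι] (P : Finset Pt) (hcard : 5 ≤ P.card)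
    (hP : ConvexPos P) (F : ι → Set (Sym2 Pt)) (hunion : (⋃ i, F i) = KEdges P)
    (hplane : ∀ i, KPlane 1 (F i)) : ⌈(P.card : ℝ) / 3⌉₊ ≤ Fintype.card ι := by
  classical
  obtain ⟨n, hn⟩ : ∃ n, P.card = n + 1 := ⟨P.card - 1, by lia⟩
  obtain ⟨f, hccw⟩ := hP.exists_ccw_enumeration hn
  have hf : Function.Injective fun i ↦ (f i : Pt) := Subtype.val_injective.comp f.injective
  let E (i : ι) : Finset (Fin (n + 1) × Fin (n + 1)) :=
    {e ∈ chords Finset.univ | s((f e.1 : Pt), (f e.2 : Pt)) ∈ F i}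
  have hE (i : ι) : IsOnePlane (E i : Set (Fin (n + 1) × Fin (n + 1))) := by
    have hfin : (F i).Finite := (finite_kEdges P).subset (hunion ▸ Set.subset_iUnion F i)
    exact ((hplane i).isOnePlane hf hccw hfin).mono fun e ↦ by simp [E, mem_chords]
  have hcover : Finset.univ.biUnion E = chords Finset.univ := by
    refine (Finset.biUnion_subset.2 fun i _ ↦ Finset.filter_subset _ _).antisymm fun e he ↦ ?_
    have hedge : s((f e.1 : Pt), (f e.2 : Pt)) ∈ KEdges P :=
      ⟨_, (f e.1).2, _, (f e.2).2, hf.ne (mem_chords.1 he).2.2.ne, rfl⟩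
    obtain ⟨i, hi⟩ := Set.mem_iUnion.1 (hunion ▸ hedge)
    exact Finset.mem_biUnion.2 ⟨i, Finset.mem_univ i, Finset.mem_filter.2 ⟨he, hi⟩⟩
  have hle := le_three_mul_card_of_isOnePlane_cover (by lia) E hE hcover
  rw [Nat.ceil_le, div_le_iff₀' (by norm_num), hn]
  exact_mod_cast hle

/-- For `n ≥ 5` points in convex position, every partition of `K(P)` into
1-plane classes uses at least `⌈n/3⌉` classes. -/
theorem stmt_1 (n : ℕ) (hn : 5 ≤ n) (P : Finset Pt) (hP : ConvexPos P) (hcard : P.card = n)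
    (c : ℕ) (F : Fin c → Set (Sym2 Pt))
    (hunion : (⋃ i, F i) = KEdges P)
    (hdisj : Pairwise fun i j => Disjoint (F i) (F j))
    (hplane : ∀ i, KPlane 1 (F i)) :
    ⌈(n : ℝ) / 3⌉₊ ≤ c := by
  simpa [hcard] using stmt_1_general P (hcard ▸ hn) hP F hunion hplane
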